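/- For every finite coloring χ of T and all positive integers n and s, there exist x, c_1, …, c_n ∈ T such that: (i) for every 0 ≤ i ≤ n, χ((c_1·c_2⋯c_i)·x) = χ(x) (with the empty product omitted when i = 0); and (ii) for every 0 ≤ i < n and every nonzero good polynomial P in n − i variables of size at most s, χ((c_1·c_2⋯c_i)·x + P(c_{i+1}, c_{i+2}, …, c_n)) = χ(x). -/

import Mathlib

/-- `InT p` means `p` is a nonzero good polynomial in one variable, i.e. an element
of the semiring `T`: nonzero, with nonnegative integer coefficients (automatic over `ℕ`)
and zero constant term. -/
def InT (p : Polynomial ℕ) : Prop := p ≠ 0 ∧ p.coeff 0 = 0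

/-- A nonzero good multivariate polynomial of size at most `c`: nonzero, zero constant
term, total degree at most `c`, and all coefficients at most `c`. -/
def GoodOfSize {σ : Type*} (c : ℕ) (P : MvPolynomial σ ℕ) : Prop :=
  P ≠ 0 ∧ MvPolynomial.coeff 0 P = 0 ∧ P.totalDegree ≤ c ∧ ∀ d, MvPolynomial.coeff d P ≤ c

/-!
The engine is the polynomial van der Waerden theorem: a PET induction with colour focusing proves
it in commutative rings, and it descends to a cancellative semiring `R` through `ℤ ⊗[ℕ] R`.

It yields arbitrarily long chains of multipliers `y 0, …, y (k - 1)` with a starting element `x`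
such that adding the value of a given polynomial at `y i, y (i + 1), …` to the product
`y 0 * ⋯ * y (i - 1) * x` does not change the colour. A new last multiplier `h = t * U * d`, with
`U` divisible by all earlier partial products, changes the value of the polynomial by a multiple
`p * (t * G d)` of the partial product `p`. This is also the effect of translating `x` by
`t * G d`, so the polynomial van der Waerden theorem provides a `d` for which the colouring does
not see it.

For `r` colours, `n + 1` of the partial products of a chain of length `r * n`, multiplied by `x`,
have the same colour. The multipliers `c i` are the products of the `y j` over the blocks between
them.
-/

section PolynomialExhaustion

open Polynomial

theorem toColex_lt_toColex_of_lt_of_le {α N : Type*} [LinearOrder α] [LinearOrder N] [Zero N]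
    {f g : α →₀ N} (i : α) (hi : f i < g i) (hle : ∀ j, i < j → f j ≤ g j) :
    toColex f < toColex g := by
  rcases lt_trichotomy (toColex f) (toColex g) with hlt | heq | hgt
  · exact hlt
  · rw [toColex_inj] at heq
    exact absurd (heq ▸ hi) (lt_irrefl _)
  · obtain ⟨j, heq, hj⟩ := Finsupp.Colex.lt_iff.1 hgt
    rcases lt_trichotomy i j with hij | rfl | hji
    · exact absurd hj (hle j hij).not_gt
    · exact absurd hj hi.not_gt
    · exact absurd (heq i hji) hi.ne'

section Weight

variable {R : Type*} [Semiring R]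

open scoped Classical in
/-- The leading coefficients of the polynomials of degree `e` in `A`. -/
noncomputable def leadCoeffs (A : Finset R[X]) (e : ℕ) : Finset R :=
  (A.filter fun p => p.natDegree = e).image leadingCoeff

theorem mem_leadCoeffs {A : Finset R[X]} {e : ℕ} {c : R} :
    c ∈ leadCoeffs A e ↔ ∃ p ∈ A, p.natDegree = e ∧ p.leadingCoeff = c := by
  simp only [leadCoeffs, Finset.mem_image, Finset.mem_filter, and_assoc]

/-- The weight of a finite set of polynomials in the polynomial exhaustion (PET) induction: the
number of leading coefficients in each degree, where higher degrees take precedence. -/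
noncomputable def petWeight (A : Finset R[X]) : Colex (ℕ →₀ ℕ) :=
  toColex <| Finsupp.onFinset (A.image natDegree) (fun e => (leadCoeffs A e).card) fun e he => by
    obtain ⟨c, hc⟩ := Finset.card_ne_zero.1 he
    obtain ⟨p, hp, hpe, -⟩ := mem_leadCoeffs.1 hc
    exact Finset.mem_image.2 ⟨p, hp, hpe⟩

end Weight

variable {R : Type*} [CommRing R]

/-- The polynomial `x ↦ p (x + d) - p d - p₁ x` of the PET induction. If the base point of a
progression moves from `a` to `a - p₁ e` and its difference from `d` to `e + d`, then the point
`a + p d` moves by the value of this polynomial at `e`. -/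
noncomputable def shiftDiff (p₁ p : R[X]) (d : R) : R[X] :=
  taylor d p - C (p.eval d) - p₁

theorem eval_shiftDiff (p₁ p : R[X]) (d x : R) :
    (shiftDiff p₁ p d).eval x = p.eval (x + d) - p.eval d - p₁.eval x := by
  simp only [shiftDiff, eval_sub, taylor_eval, eval_C]

theorem eval_zero_shiftDiff {p₁ : R[X]} (h₁ : p₁.eval 0 = 0) (p : R[X]) (d : R) :
    (shiftDiff p₁ p d).eval 0 = 0 := by
  rw [eval_shiftDiff, zero_add, sub_self, h₁, sub_zero]

theorem natDegree_shiftDiff_le {p₁ p : R[X]} (d : R) (hp : p₁.natDegree ≤ p.natDegree) :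
    (shiftDiff p₁ p d).natDegree ≤ p.natDegree :=
  (natDegree_sub_le_of_le (natDegree_sub_C.trans (natDegree_taylor p d)).le hp).trans
    (max_self _).le

theorem coeff_natDegree_shiftDiff {p : R[X]} (p₁ : R[X]) (d : R) (hp : p.natDegree ≠ 0) :
    (shiftDiff p₁ p d).coeff p.natDegree = p.leadingCoeff - p₁.coeff p.natDegree := by
  simp only [shiftDiff, coeff_sub, coeff_taylor_natDegree, coeff_C_of_ne_zero hp, sub_zero]

theorem natDegree_shiftDiff {p₁ p : R[X]} {d : R}
    (hp : p₁.natDegree ≤ p.natDegree) (hq : p₁.natDegree ≤ (shiftDiff p₁ p d).natDegree) :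
    (shiftDiff p₁ p d).natDegree = p.natDegree := by
  refine (natDegree_shiftDiff_le d hp).antisymm ?_
  rcases hp.eq_or_lt with heq | hlt
  · exact heq ▸ hq
  · have hp0 : p.natDegree ≠ 0 := (Nat.zero_lt_of_lt hlt).ne'
    apply le_natDegree_of_ne_zero
    rw [coeff_natDegree_shiftDiff p₁ d hp0, coeff_eq_zero_of_natDegree_lt hlt, sub_zero]
    exact leadingCoeff_ne_zero.2 fun h => hp0 (h ▸ natDegree_zero)

theorem leadingCoeff_shiftDiff {p₁ p : R[X]} {d : R} (h₁ : p₁.natDegree ≠ 0)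
    (hp : p₁.natDegree ≤ p.natDegree) (hq : p₁.natDegree ≤ (shiftDiff p₁ p d).natDegree) :
    (shiftDiff p₁ p d).leadingCoeff = p.leadingCoeff - p₁.coeff p.natDegree := by
  rw [leadingCoeff, natDegree_shiftDiff hp hq,
    coeff_natDegree_shiftDiff p₁ d (by omega)]

open scoped Classical in
/-- The family to which the PET induction passes from `A`: the nonzero shifted differences of the
members of `A` by elements of `D`. -/
noncomputable def shiftDiffs (p₁ : R[X]) (A : Finset R[X]) (D : Finset R) : Finset R[X] :=
  (Finset.image₂ (shiftDiff p₁) A D).erase 0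

theorem mem_shiftDiffs {p₁ q : R[X]} {A : Finset R[X]} {D : Finset R} :
    q ∈ shiftDiffs p₁ A D ↔ q ≠ 0 ∧ ∃ p ∈ A, ∃ d ∈ D, shiftDiff p₁ p d = q := by
  simp only [shiftDiffs, Finset.mem_erase, Finset.mem_image₂]

theorem leadCoeffs_shiftDiffs_subset {A : Finset R[X]} {p₁ : R[X]} (h₁ : p₁.natDegree ≠ 0)
    (hmin : ∀ p ∈ A, p₁.natDegree ≤ p.natDegree) (D : Finset R) {e : ℕ} (he : p₁.natDegree < e) :
    leadCoeffs (shiftDiffs p₁ A D) e ⊆ leadCoeffs A e := by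
  intro c hc
  obtain ⟨q, hq, rfl, rfl⟩ := mem_leadCoeffs.1 hc
  obtain ⟨-, p, hp, d, -, rfl⟩ := mem_shiftDiffs.1 hq
  have hdeg := natDegree_shiftDiff (hmin p hp) he.le
  refine mem_leadCoeffs.2 ⟨p, hp, hdeg.symm, ?_⟩
  rw [leadingCoeff_shiftDiff h₁ (hmin p hp) he.le,
    coeff_eq_zero_of_natDegree_lt (hdeg ▸ he), sub_zero]

theorem card_leadCoeffs_shiftDiffs_lt {A : Finset R[X]} {p₁ : R[X]} (hp₁ : p₁ ∈ A)
    (h₁ : p₁.natDegree ≠ 0) (hmin : ∀ p ∈ A, p₁.natDegree ≤ p.natDegree) (D : Finset R) :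
    (leadCoeffs (shiftDiffs p₁ A D) p₁.natDegree).card < (leadCoeffs A p₁.natDegree).card := by
  classical
  have hsub : leadCoeffs (shiftDiffs p₁ A D) p₁.natDegree ⊆
      ((leadCoeffs A p₁.natDegree).erase p₁.leadingCoeff).image (· - p₁.leadingCoeff) := by
    intro c hc
    obtain ⟨q, hq, hqdeg, rfl⟩ := mem_leadCoeffs.1 hc
    obtain ⟨hq0, p, hp, d, -, rfl⟩ := mem_shiftDiffs.1 hq
    have hdeg := natDegree_shiftDiff (hmin p hp) hqdeg.ge
    have hlead := leadingCoeff_shiftDiff h₁ (hmin p hp) hqdeg.ge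
    rw [← hdeg, hqdeg, coeff_natDegree] at hlead
    refine Finset.mem_image.2 ⟨p.leadingCoeff, Finset.mem_erase.2 ⟨fun heq => hq0 ?_, ?_⟩,
      hlead.symm⟩
    · rwa [heq, sub_self, leadingCoeff_eq_zero] at hlead
    · exact mem_leadCoeffs.2 ⟨p, hp, hdeg ▸ hqdeg, rfl⟩
  calc (leadCoeffs (shiftDiffs p₁ A D) p₁.natDegree).card
      ≤ ((leadCoeffs A p₁.natDegree).erase p₁.leadingCoeff).card :=
        (Finset.card_le_card hsub).trans Finset.card_image_le
    _ < (leadCoeffs A p₁.natDegree).card :=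
        Finset.card_erase_lt_of_mem (mem_leadCoeffs.2 ⟨p₁, hp₁, rfl, rfl⟩)

theorem petWeight_shiftDiffs_lt {A : Finset R[X]} {p₁ : R[X]} (hp₁ : p₁ ∈ A)
    (h₁ : p₁.natDegree ≠ 0) (hmin : ∀ p ∈ A, p₁.natDegree ≤ p.natDegree) (D : Finset R) :
    petWeight (shiftDiffs p₁ A D) < petWeight A :=
  toColex_lt_toColex_of_lt_of_le p₁.natDegree (card_leadCoeffs_shiftDiffs_lt hp₁ h₁ hmin D)
    fun _ he => Finset.card_le_card (leadCoeffs_shiftDiffs_subset h₁ hmin D he)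

end PolynomialExhaustion

section PolynomialVanDerWaerden

open Polynomial TensorProduct
open scoped Pointwise

variable {R : Type*} {κ : Type*}

/-- The polynomial van der Waerden property of the family `A` with differences in `S`, in its
finitary form: base points and differences can be taken from finite sets not depending on the
colouring. -/
def PolyVdW [Semiring R] (S : Set R) (A : Finset R[X]) : Prop :=
  ∀ r, ∃ V D : Finset R, ↑D ⊆ S ∧
    ∀ χ : R → Fin r, ∃ a ∈ V, ∃ d ∈ D, ∀ p ∈ A, χ (a + p.eval d) = χ a

theorem PolyVdW.exists_finset [Semiring R] {S : Set R} {A : Finset R[X]} (h : PolyVdW S A)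
    (κ : Type*) [Finite κ] : ∃ V D : Finset R, ↑D ⊆ S ∧
      ∀ χ : R → κ, ∃ a ∈ V, ∃ d ∈ D, ∀ p ∈ A, χ (a + p.eval d) = χ a := by
  obtain ⟨V, D, hD, hVD⟩ := h (Nat.card κ)
  refine ⟨V, D, hD, fun χ => ?_⟩
  simpa only [Function.comp_apply, EmbeddingLike.apply_eq_iff_eq] using hVD (Finite.equivFin κ ∘ χ)

/-- Colour focusing: each colour in `Γ` is attained by a progression `a + p d`, `p ∈ A`, based at
the common focus `a`, with a difference `d ∈ D`. -/
def IsFocused [Semiring R] (χ : R → κ) (A : Finset R[X]) (D : Finset R) (a : R) (Γ : Finset κ) :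
    Prop :=
  ∀ γ ∈ Γ, ∃ d ∈ D, ∀ p ∈ A, χ (a + p.eval d) = γ

theorem IsFocused.sub_eval [CommRing R] [DecidableEq R] [DecidableEq κ] {χ : R → κ}
    {A : Finset R[X]} {D D' : Finset R} {a b e : R} {p₁ : R[X]} {Γ : Finset κ}
    (h0 : ∀ p ∈ A, p.eval 0 = 0) (he : e ∈ D')
    (hinv : ∀ p ∈ A, ∀ d ∈ insert 0 D,
      χ (b + (a + p.eval d) + (shiftDiff p₁ p d).eval e) = χ (b + (a + p.eval d)))
    (hfoc : IsFocused (fun z => χ (b + z)) A D a Γ) :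
    IsFocused χ A (D' + insert 0 D) (b + a - p₁.eval e) (insert (χ (b + a)) Γ) := by
  have hmove : ∀ p ∈ A, ∀ d ∈ insert 0 D,
      χ (b + a - p₁.eval e + p.eval (e + d)) = χ (b + (a + p.eval d)) := by
    intro p hp d hd
    rw [← hinv p hp d hd, eval_shiftDiff]
    congr 1
    ring
  intro γ hγ
  rcases Finset.mem_insert.1 hγ with rfl | hγ
  · refine ⟨e + 0, Finset.add_mem_add he (Finset.mem_insert_self _ _), fun p hp => ?_⟩
    rw [hmove p hp 0 (Finset.mem_insert_self _ _), h0 p hp, add_zero]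
  · obtain ⟨d, hd, hcol⟩ := hfoc γ hγ
    have hd' : d ∈ insert 0 D := Finset.mem_insert_of_mem hd
    exact ⟨e + d, Finset.add_mem_add he hd', fun p hp => (hmove p hp d hd').trans (hcol p hp)⟩

theorem exists_shiftDiff_invariant [CommRing R] {S : Set R} {p₁ : R[X]} {A : Finset R[X]}
    {D : Finset R} (h : PolyVdW S (shiftDiffs p₁ A D)) (V : Finset R) (κ : Type*) [Finite κ] :
    ∃ V' D' : Finset R, ↑D' ⊆ S ∧ ∀ χ : R → κ, ∃ b ∈ V', ∃ e ∈ D', ∀ a ∈ V, ∀ p ∈ A, ∀ d ∈ D,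
      χ (b + (a + p.eval d) + (shiftDiff p₁ p d).eval e) = χ (b + (a + p.eval d)) := by
  classical
  let W : Finset R := V + Finset.image₂ (fun p d => p.eval d) A D
  obtain ⟨V', D', hD', hVD'⟩ := h.exists_finset (W → κ)
  refine ⟨V', D', hD', fun χ => ?_⟩
  obtain ⟨b, hb, e, he, hwin⟩ := hVD' fun z u => χ (z + u)
  refine ⟨b, hb, e, he, fun a ha p hp d hd => ?_⟩
  by_cases hq : shiftDiff p₁ p d = 0
  · rw [hq, eval_zero, add_zero]
  · rw [add_right_comm]
    exact congrFun (hwin _ (mem_shiftDiffs.2 ⟨hq, p, hp, d, hd, rfl⟩))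
      ⟨a + p.eval d, Finset.add_mem_add ha (Finset.mem_image₂_of_mem hp hd)⟩

theorem exists_mono_or_isFocused [CommRing R] {S : AddSubsemigroup R} {A : Finset R[X]}
    {p₁ : R[X]} (h0 : ∀ p ∈ A, p.eval 0 = 0) (ih : ∀ D, PolyVdW (S : Set R) (shiftDiffs p₁ A D))
    (κ : Type*) [Finite κ] (k : ℕ) :
    ∃ V D : Finset R, (D : Set R) ⊆ S ∧ ∀ χ : R → κ,
      (∃ a ∈ V, ∃ d ∈ D, ∀ p ∈ A, χ (a + p.eval d) = χ a) ∨
      ∃ a ∈ V, ∃ Γ : Finset κ, Γ.card = k ∧ χ a ∉ Γ ∧ IsFocused χ A D a Γ := by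
  classical
  induction k with
  | zero => exact ⟨{0}, ∅, by simp, fun χ => Or.inr ⟨0, by simp, ∅, by simp [IsFocused]⟩⟩
  | succ k hk =>
    obtain ⟨V, D, hD, hVD⟩ := hk
    obtain ⟨V', D', hD', hVD'⟩ := exists_shiftDiff_invariant (ih (insert 0 D)) V κ
    refine ⟨V' + V ∪ (V' + V - D'.image p₁.eval), D ∪ (D' + insert 0 D), ?_, fun χ => ?_⟩
    · intro d hd
      rcases Finset.mem_union.1 hd with hd | hd
      · exact hD hd
      · obtain ⟨e, he, d', hd', rfl⟩ := Finset.mem_add.1 hd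
        rcases Finset.mem_insert.1 hd' with rfl | hd'
        · rw [add_zero]
          exact hD' he
        · exact S.add_mem (hD' he) (hD hd')
    obtain ⟨b, hb, e, he, hinv⟩ := hVD' χ
    rcases hVD fun z => χ (b + z) with ⟨a, ha, d, hd, hmono⟩ | ⟨a, ha, Γ, hcard, haΓ, hfoc⟩
    · refine Or.inl ⟨b + a, Finset.mem_union_left _ (Finset.add_mem_add hb ha), d,
        Finset.mem_union_left _ hd, fun p hp => ?_⟩
      rw [add_assoc]
      exact hmono p hp
    have hfoc' : IsFocused χ A (D ∪ (D' + insert 0 D)) (b + a - p₁.eval e)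
        (insert (χ (b + a)) Γ) := fun γ hγ =>
      let ⟨d, hd, hcol⟩ := hfoc.sub_eval h0 he (hinv a ha) γ hγ
      ⟨d, Finset.mem_union_right _ hd, hcol⟩
    have hfocus : b + a - p₁.eval e ∈ V' + V ∪ (V' + V - D'.image p₁.eval) :=
      Finset.mem_union_right _
        (Finset.sub_mem_sub (Finset.add_mem_add hb ha) (Finset.mem_image_of_mem _ he))
    by_cases hc : χ (b + a - p₁.eval e) ∈ insert (χ (b + a)) Γ
    · exact Or.inl ⟨_, hfocus, hfoc' _ hc⟩
    · exact Or.inr ⟨_, hfocus, _, by rw [Finset.card_insert_of_notMem haΓ, hcard], hc, hfoc'⟩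

theorem polyVdW_of_zero_notMem [CommRing R] (S : AddSubsemigroup R) (hS : (S : Set R).Nonempty)
    (A : Finset R[X]) (hA : 0 ∉ A) (h0 : ∀ p ∈ A, p.eval 0 = 0) : PolyVdW (S : Set R) A := by
  induction A using WellFounded.induction (InvImage.wf petWeight wellFounded_lt) with
  | _ A ih =>
  intro r
  rcases A.eq_empty_or_nonempty with rfl | hne
  · obtain ⟨s, hs⟩ := hS
    exact ⟨{0}, {s}, by simpa using hs, by simp⟩
  obtain ⟨p₁, hp₁, hmin⟩ := A.exists_min_image natDegree hne
  have hdeg : p₁.natDegree ≠ 0 := by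
    intro h
    obtain ⟨c, rfl⟩ := natDegree_eq_zero.1 h
    have hc : c = 0 := by simpa using h0 _ hp₁
    exact hA (by simpa [hc] using hp₁)
  have hshift : ∀ D, PolyVdW (S : Set R) (shiftDiffs p₁ A D) := fun D =>
    ih _ (petWeight_shiftDiffs_lt hp₁ hdeg hmin D) (fun h => (mem_shiftDiffs.1 h).1 rfl)
      fun q hq => by
        obtain ⟨-, p, -, d, -, rfl⟩ := mem_shiftDiffs.1 hq
        exact eval_zero_shiftDiff (h0 p₁ hp₁) p d
  obtain ⟨V, D, hD, hVD⟩ := exists_mono_or_isFocused h0 hshift (Fin r) r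
  refine ⟨V, D, hD, fun χ => (hVD χ).resolve_right ?_⟩
  rintro ⟨a, -, Γ, hcard, haΓ, -⟩
  rw [Finset.eq_univ_of_card Γ (hcard.trans (Fintype.card_fin r).symm)] at haΓ
  exact haΓ (Finset.mem_univ _)

theorem polyVdW_of_commRing [CommRing R] (S : AddSubsemigroup R) (hS : (S : Set R).Nonempty)
    (A : Finset R[X]) (h0 : ∀ p ∈ A, p.eval 0 = 0) : PolyVdW (S : Set R) A := by
  classical
  intro r
  obtain ⟨V, D, hD, hVD⟩ := polyVdW_of_zero_notMem S hS (A.erase 0) (Finset.notMem_erase _ _)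
    (fun p hp => h0 p (Finset.mem_of_mem_erase hp)) r
  refine ⟨V, D, hD, fun χ => ?_⟩
  obtain ⟨a, ha, d, hd, hmono⟩ := hVD χ
  refine ⟨a, ha, d, hd, fun p hp => ?_⟩
  by_cases hp0 : p = 0
  · rw [hp0, eval_zero, add_zero]
  · exact hmono p (Finset.mem_erase.2 ⟨hp0, hp⟩)

theorem one_tmul_injective (M : Type*) [AddCommMonoid M] [IsCancelAdd M] :
    Function.Injective (TensorProduct.mk ℕ ℤ M 1) := by
  let toGrothendieck : ℤ ⊗[ℕ] M →ₗ[ℕ] Algebra.GrothendieckAddGroup M :=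
    TensorProduct.lift <| LinearMap.mk₂ ℕ (fun n a => n • Algebra.GrothendieckAddGroup.of a)
      (fun _ _ _ => add_smul _ _ _) (fun _ _ _ => smul_assoc _ _ _)
      (fun _ _ _ => by rw [map_add, smul_add])
      (fun _ _ _ => by rw [map_nsmul, smul_comm])
  have hone : toGrothendieck ∘ TensorProduct.mk ℕ ℤ M 1 = Algebra.GrothendieckAddGroup.of :=
    funext fun a => one_smul ℤ (Algebra.GrothendieckAddGroup.of a)
  exact (hone ▸ Algebra.GrothendieckAddGroup.of_injective).of_comp

theorem exists_add_one_tmul_eq {M : Type*} [AddCommMonoid M] (z : ℤ ⊗[ℕ] M) :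
    ∃ a b : M, z + 1 ⊗ₜ[ℕ] a = 1 ⊗ₜ[ℕ] b := by
  induction z with
  | zero => exact ⟨0, 0, by simp⟩
  | tmul n a =>
    obtain ⟨k, rfl | rfl⟩ := n.eq_nat_or_neg
    · refine ⟨0, k • a, ?_⟩
      rw [tmul_zero, add_zero, tmul_smul, smul_tmul', nsmul_one]
    · refine ⟨k • a, 0, ?_⟩
      rw [tmul_smul, smul_tmul', nsmul_one, ← add_tmul, neg_add_cancel, zero_tmul, tmul_zero]
  | add z w hz hw =>
    obtain ⟨a, b, hab⟩ := hz
    obtain ⟨c, d, hcd⟩ := hw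
    exact ⟨a + c, b + d, by rw [tmul_add, tmul_add, ← hab, ← hcd, add_add_add_comm]⟩

theorem exists_forall_mem_add_one_tmul_eq {M : Type*} [AddCommMonoid M]
    (V : Finset (ℤ ⊗[ℕ] M)) : ∃ v : M, ∀ z ∈ V, ∃ a : M, z + 1 ⊗ₜ[ℕ] v = 1 ⊗ₜ[ℕ] a := by
  classical
  choose p q hpq using exists_add_one_tmul_eq (M := M)
  refine ⟨∑ z ∈ V, p z, fun z hz => ⟨q z + ∑ w ∈ V.erase z, p w, ?_⟩⟩
  rw [← Finset.add_sum_erase V p hz, tmul_add, tmul_add, ← hpq z, add_assoc]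

theorem polyVdW [CommSemiring R] [IsCancelAdd R] (S : AddSubsemigroup R)
    (hS : (S : Set R).Nonempty) (A : Finset R[X]) (h0 : ∀ p ∈ A, p.eval 0 = 0) :
    PolyVdW (S : Set R) A := by
  classical
  let ι : R →+* ℤ ⊗[ℕ] R :=
    (Algebra.TensorProduct.includeRight : R →ₐ[ℕ] ℤ ⊗[ℕ] R).toRingHom
  have hι : Function.Injective ι := one_tmul_injective R
  intro r
  obtain ⟨V, D, hD, hVD⟩ := polyVdW_of_commRing (S.map (ι : R →ₙ+ ℤ ⊗[ℕ] R)) (hS.image ι)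
    (A.image (Polynomial.map ι)) (fun q hq => by
      obtain ⟨p, hp, rfl⟩ := Finset.mem_image.1 hq
      rw [← map_zero ι, eval_map_apply, h0 p hp]) r
  -- After translation by `ι v` all base points lie in the image of `R`, where `χ` is available.
  obtain ⟨v, hv⟩ := exists_forall_mem_add_one_tmul_eq V
  choose! b hb using hv
  obtain ⟨D, hDS, rfl⟩ := Finset.subset_set_image_iff.1 hD
  refine ⟨V.image b, D, hDS, fun χ => ?_⟩
  obtain ⟨z, hz, d, hd, hmono⟩ := hVD fun w => χ (Function.invFun ι (w + 1 ⊗ₜ v))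
  obtain ⟨d, hdD, rfl⟩ := Finset.mem_image.1 hd
  refine ⟨b z, Finset.mem_image_of_mem b hz, d, hdD, fun p hp => ?_⟩
  have hbz : z + 1 ⊗ₜ v = ι (b z) := hb z hz
  have hcol : χ (Function.invFun ι (z + (p.map ι).eval (ι d) + 1 ⊗ₜ v)) =
      χ (Function.invFun ι (z + 1 ⊗ₜ v)) := hmono _ (Finset.mem_image_of_mem _ hp)
  rwa [eval_map_apply, add_right_comm, hbz, ← map_add, Function.leftInverse_invFun hι,
    Function.leftInverse_invFun hι] at hcol

end PolynomialVanDerWaerden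

section Chains

open Polynomial

variable {R₀ R : Type*} [CommSemiring R₀] [CommSemiring R] [Algebra R₀ R] {σ κ : Type*}

theorem exists_aeval_update [DecidableEq σ] (f : MvPolynomial σ R₀) {y : σ → R} {k : σ}
    (hy : y k = 0) : ∃ g : R[X], ∀ h,
      MvPolynomial.aeval (Function.update y k h) f = MvPolynomial.aeval y f + h * g.eval h := by
  let Φ : R[X] := MvPolynomial.aeval (Function.update (fun j => C (y j)) k X) f
  have hΦ : ∀ h, Φ.eval h = MvPolynomial.aeval (Function.update y k h) f := by
    intro h
    rw [← coe_aeval_eq_eval, ← AlgHom.coe_restrictScalars' R₀, MvPolynomial.comp_aeval_apply]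
    congr 2
    funext j
    rcases eq_or_ne j k with rfl | hj
    · simp
    · simp [hj]
  have hΦ0 : Φ.coeff 0 = MvPolynomial.aeval y f := by
    rw [coeff_zero_eq_eval_zero, hΦ, ← hy, Function.update_eq_self]
  refine ⟨divX Φ, fun h => ?_⟩
  rw [← hΦ, ← hΦ0]
  conv_lhs => rw [← divX_mul_X_add Φ]
  rw [eval_add, eval_mul, eval_X, eval_C, add_comm, mul_comm]

theorem exists_aeval_update_mul_of_dvd [DecidableEq σ] (f : MvPolynomial σ R₀) {y : σ → R} {k : σ}
    (hy : y k = 0) {p U : R} (hpU : p ∣ U) (t : R) : ∃ G : R[X], G.eval 0 = 0 ∧ ∀ d,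
      MvPolynomial.aeval (Function.update y k (t * U * d)) f =
        MvPolynomial.aeval y f + p * (t * G.eval d) := by
  obtain ⟨g, hg⟩ := exists_aeval_update f hy
  obtain ⟨u, rfl⟩ := hpU
  refine ⟨X * C u * g.comp (C (t * (p * u)) * X), by simp, fun d => ?_⟩
  rw [hg]
  simp only [eval_mul, eval_X, eval_C, eval_comp]
  ring

/-- `x` and `y 0, …, y (k - 1)` are nonzero elements of the ideal `I`. The sequence of multipliers
`y` is padded with zeros, so that polynomials in infinitely many variables can be evaluated at
it. -/
structure IsMultiplierChain (I : Ideal R) (k : ℕ) (x : R) (y : ℕ → R) : Prop where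
  start : x ≠ 0 ∧ x ∈ I
  multiplier : ∀ j < k, y j ≠ 0 ∧ y j ∈ I
  eq_zero : ∀ j ≥ k, y j = 0

/-- The colour of each partial product `y 0 * ⋯ * y (i - 1) * x`, `i ≤ k`, does not change when the
value of a member of `F` at the later multipliers `y i, y (i + 1), …` is added. The colouring may
depend on the partial product; this allows a translation of `x` to be absorbed by the colouring. -/
def IsStable (χ : R → R → κ) (F : Finset (MvPolynomial ℕ R₀)) (k : ℕ) (x : R) (y : ℕ → R) : Prop :=
  ∀ i ≤ k, ∀ f ∈ F,
    χ (∏ j ∈ Finset.range i, y j)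
        ((∏ j ∈ Finset.range i, y j) * x + MvPolynomial.aeval (fun j => y (i + j)) f) =
      χ (∏ j ∈ Finset.range i, y j) ((∏ j ∈ Finset.range i, y j) * x)

theorem aeval_shift_eq_zero {f : MvPolynomial ℕ R₀} (hf : MvPolynomial.constantCoeff f = 0)
    {y : ℕ → R} {k : ℕ} (hy : ∀ j ≥ k, y j = 0) :
    MvPolynomial.aeval (fun j => y (k + j)) f = 0 := by
  have hshift : (fun j => y (k + j)) = fun _ => 0 := funext fun j => hy _ (Nat.le_add_right k j)
  rw [hshift, MvPolynomial.aeval_zero', hf, map_zero]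

theorem shift_update_eq_update_shift {α : Type*} (y : ℕ → α) {i k : ℕ} (hik : i ≤ k) (h : α) :
    (fun j => Function.update y k h (i + j)) =
      Function.update (fun j => y (i + j)) (k - i) h := by
  obtain ⟨m, rfl⟩ := Nat.exists_eq_add_of_le hik
  rw [Nat.add_sub_cancel_left]
  exact Function.update_comp_eq_of_injective y (add_right_injective i) m h

theorem prod_range_update (y : ℕ → R) {i k : ℕ} (hik : i ≤ k) (h : R) :
    ∏ j ∈ Finset.range i, Function.update y k h j = ∏ j ∈ Finset.range i, y j :=
  Finset.prod_congr rfl fun _ hj =>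
    Function.update_of_ne ((Finset.mem_range.1 hj).trans_le hik).ne _ _

theorem IsMultiplierChain.extend [Subsingleton (AddUnits R)] {I : Ideal R} {k : ℕ} {x z h : R}
    {y : ℕ → R} (hxy : IsMultiplierChain I k x y) (hz : z ∈ I) (hh : h ≠ 0 ∧ h ∈ I) :
    IsMultiplierChain I (k + 1) (z + x) (Function.update y k h) where
  start := ⟨fun h0 => hxy.start.1 (add_eq_zero.1 h0).2, I.add_mem hz hxy.start.2⟩
  multiplier j hj := by
    rcases Nat.lt_succ_iff_lt_or_eq.1 hj with hjk | rfl
    · simpa only [Function.update_of_ne hjk.ne] using hxy.multiplier j hjk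
    · simpa only [Function.update_self] using hh
  eq_zero j hj := by
    rw [Function.update_of_ne (Nat.lt_of_succ_le hj).ne']
    exact hxy.eq_zero j (Nat.le_of_succ_le hj)

/-- The colouring does not see the multiplier `h` appended to `y 0, …, y (k - 1)`: over the
translated starting element `z + x`, the values of members of `F` at the later multipliers have the
same effect with and without `h`. -/
def IsInvisible (χ : R → R → κ) (F : Finset (MvPolynomial ℕ R₀)) (k : ℕ) (x : R) (y : ℕ → R)
    (z h : R) : Prop :=
  ∀ i ≤ k, ∀ f ∈ F,
    χ (∏ j ∈ Finset.range i, y j) ((∏ j ∈ Finset.range i, y j) * (z + x) +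
        MvPolynomial.aeval (fun j => Function.update y k h (i + j)) f) =
      χ (∏ j ∈ Finset.range i, y j) ((∏ j ∈ Finset.range i, y j) * (z + x) +
        MvPolynomial.aeval (fun j => y (i + j)) f)

theorem IsStable.extend {χ : R → R → κ} {F : Finset (MvPolynomial ℕ R₀)}
    (hF : ∀ f ∈ F, MvPolynomial.constantCoeff f = 0) {k : ℕ} {x z h : R} {y : ℕ → R}
    (hy : ∀ j ≥ k + 1, y j = 0) (hxy : IsStable (fun p q => χ p (p * z + q)) F k x y)
    (hh : IsInvisible χ F k x y z h) :
    IsStable χ F (k + 1) (z + x) (Function.update y k h) := by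
  intro i hi f hf
  rcases Nat.le_succ_iff.1 hi with hik | rfl
  · rw [prod_range_update y hik, hh i hik f hf, mul_add, add_assoc]
    exact hxy i hik f hf
  · rw [aeval_shift_eq_zero (hF f hf), add_zero]
    intro j hj
    rw [Function.update_of_ne (Nat.lt_of_succ_le hj).ne']
    exact hy j hj

variable [NoZeroDivisors R]

theorem exists_common_aeval_update [Nontrivial R] {I : Ideal R} {k : ℕ} {K : Finset (R × (ℕ → R))}
    (hK : ∀ w ∈ K, IsMultiplierChain I k w.1 w.2) (t : R) :
    ∃ U ≠ 0, ∀ w ∈ K, ∀ i ≤ k, ∀ f : MvPolynomial ℕ R₀, ∃ G : R[X], G.eval 0 = 0 ∧ ∀ d,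
      MvPolynomial.aeval (fun j => Function.update w.2 k (t * U * d) (i + j)) f =
        MvPolynomial.aeval (fun j => w.2 (i + j)) f +
          (∏ j ∈ Finset.range i, w.2 j) * (t * G.eval d) := by
  refine ⟨∏ w ∈ K, ∏ j ∈ Finset.range k, w.2 j, ?_, fun w hw i hi f => ?_⟩
  · exact Finset.prod_ne_zero_iff.2 fun w hw => Finset.prod_ne_zero_iff.2
      fun j hj => ((hK w hw).multiplier j (Finset.mem_range.1 hj)).1
  · simp only [shift_update_eq_update_shift w.2 hi]
    refine exists_aeval_update_mul_of_dvd f ?_ ?_ t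
    · exact (hK w hw).eq_zero _ (Nat.add_sub_cancel' hi).ge
    · exact (Finset.prod_dvd_prod_of_subset _ _ _ (Finset.range_subset_range.2 hi)).trans
        (Finset.dvd_prod_of_mem (fun w => ∏ j ∈ Finset.range k, w.2 j) hw)

variable [IsCancelAdd R] [Subsingleton (AddUnits R)]

theorem exists_isInvisible {t : R} (ht : t ≠ 0) {I : Ideal R} {k : ℕ}
    {K : Finset (R × (ℕ → R))} (hK : ∀ w ∈ K, IsMultiplierChain I k w.1 w.2)
    (F : Finset (MvPolynomial ℕ R₀)) (κ : Type*) [Finite κ] :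
    ∃ V H : Finset R, (∀ h ∈ H, h ≠ 0 ∧ t ∣ h) ∧
      ∀ χ : R → R → κ, ∃ z ∈ V, ∃ h ∈ H, ∀ w ∈ K, IsInvisible χ F k w.1 w.2 (t * z) h := by
  classical
  have : Nontrivial R := ⟨t, 0, ht⟩
  obtain ⟨U, hU, hG⟩ := exists_common_aeval_update (R₀ := R₀) hK t
  choose! G hG0 hG using hG
  let J : Finset ((R × (ℕ → R)) × ℕ × MvPolynomial ℕ R₀) := K ×ˢ Finset.Iic k ×ˢ F
  let nonzero : AddSubsemigroup R :=
    { carrier := {d | d ≠ 0}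
      add_mem' := fun ha _ h => ha (add_eq_zero.1 h).1 }
  obtain ⟨V, D, hD, hVD⟩ := (polyVdW nonzero ⟨t, ht⟩ (J.image fun q => G q.1 q.2.1 q.2.2)
    (fun p hp => by
      obtain ⟨⟨w, i, f⟩, hJ, rfl⟩ := Finset.mem_image.1 hp
      obtain ⟨hw, hif⟩ := Finset.mem_product.1 hJ
      exact hG0 w hw i (Finset.mem_Iic.1 (Finset.mem_product.1 hif).1) f)).exists_finset (J → κ)
  refine ⟨V, D.image (t * U * ·), ?_, fun χ => ?_⟩
  · intro h hh
    obtain ⟨d, hd, rfl⟩ := Finset.mem_image.1 hh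
    exact ⟨mul_ne_zero (mul_ne_zero ht hU) (hD hd), mul_assoc t U d ▸ dvd_mul_right t (U * d)⟩
  obtain ⟨z, hz, d, hd, hmono⟩ := hVD fun z q =>
    let p := ∏ j ∈ Finset.range q.1.2.1, q.1.1.2 j
    χ p (p * (t * z + q.1.1.1) + MvPolynomial.aeval (fun j => q.1.1.2 (q.1.2.1 + j)) q.1.2.2)
  refine ⟨z, hz, _, Finset.mem_image_of_mem _ hd, fun w hw i hi f hf => ?_⟩
  have hJ : (w, i, f) ∈ J :=
    Finset.mk_mem_product hw (Finset.mk_mem_product (Finset.mem_Iic.2 hi) hf)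
  have hcol := congrFun (hmono _ (Finset.mem_image_of_mem _ hJ)) ⟨_, hJ⟩
  rw [hG w hw i hi f d]
  refine Eq.trans ?_ hcol
  congr 1
  ring

theorem exists_finset_isStable {I : Ideal R} (hI : I ≠ ⊥)
    (F : Finset (MvPolynomial ℕ R₀)) (hF : ∀ f ∈ F, MvPolynomial.constantCoeff f = 0) (k : ℕ)
    (κ : Type*) [Finite κ] : ∃ K : Finset (R × (ℕ → R)),
      (∀ w ∈ K, IsMultiplierChain I k w.1 w.2) ∧
      ∀ χ : R → R → κ, ∃ w ∈ K, IsStable χ F k w.1 w.2 := by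
  classical
  obtain ⟨t, htI, ht⟩ := Submodule.exists_mem_ne_zero_of_ne_bot hI
  induction k with
  | zero =>
    refine ⟨{(t, 0)}, ?_, fun χ => ⟨_, Finset.mem_singleton_self _, fun i _ f hf => ?_⟩⟩
    · intro w hw
      rw [Finset.mem_singleton.1 hw]
      exact ⟨⟨ht, htI⟩, fun _ hj => absurd hj (Nat.not_lt_zero _), fun _ _ => rfl⟩
    · have hzero : MvPolynomial.aeval (fun j => (0 : ℕ → R) (i + j)) f = 0 :=
        aeval_shift_eq_zero (hF f hf) fun _ _ => rfl
      rw [hzero, add_zero]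
  | succ k ih =>
    obtain ⟨K, hK, hKχ⟩ := ih
    obtain ⟨V, H, hH, hVH⟩ := exists_isInvisible ht hK F κ
    refine ⟨(K ×ˢ V ×ˢ H).image fun q => (t * q.2.1 + q.1.1, Function.update q.1.2 k q.2.2),
      ?_, fun χ => ?_⟩
    · intro w' hw'
      obtain ⟨⟨w, z, h⟩, hq, rfl⟩ := Finset.mem_image.1 hw'
      obtain ⟨hw, hzh⟩ := Finset.mem_product.1 hq
      obtain ⟨h0, hth⟩ := hH h (Finset.mem_product.1 hzh).2
      exact (hK w hw).extend (I.mul_mem_right z htI) ⟨h0, I.mem_of_dvd hth htI⟩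
    · obtain ⟨z, hz, h, hh, hinvisible⟩ := hVH χ
      obtain ⟨w, hw, hstable⟩ := hKχ fun p q => χ p (p * (t * z) + q)
      exact ⟨_, Finset.mem_image_of_mem _
        (Finset.mk_mem_product hw (Finset.mk_mem_product hz hh)),
        hstable.extend hF (fun j hj => (hK w hw).eq_zero j (Nat.le_of_succ_le hj))
          (hinvisible w hw)⟩

end Chains

section Blocks

theorem exists_strictMonoOn_mono_color {κ : Type*} [Finite κ] (n : ℕ) (φ : ℕ → κ) :
    ∃ σ : ℕ → ℕ, StrictMonoOn σ (Set.Iic n) ∧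
      ∀ l ≤ n, σ l ≤ Nat.card κ * n ∧ φ (σ l) = φ (σ 0) := by
  classical
  cases nonempty_fintype κ
  obtain ⟨γ, -, hγ⟩ := Finset.exists_lt_card_fiber_of_mul_lt_card_of_maps_to
    (s := Finset.range (Nat.card κ * n + 1)) (t := Finset.univ) (f := φ) (n := n)
    (fun _ _ => Finset.mem_univ _) (by simp [Nat.card_eq_fintype_card])
  let J := {i | i < Nat.card κ * n + 1 ∧ φ i = γ}
  have hJ : J.Finite := (Set.finite_lt_nat _).subset fun _ hi => hi.1
  have hcard : n < hJ.toFinset.card := by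
    convert hγ using 2
    ext i
    simp [J]
  have hmem : ∀ l ≤ n, Nat.nth (· ∈ J) l ∈ J := fun l hl =>
    Nat.nth_mem l fun _ => hl.trans_lt hcard
  refine ⟨Nat.nth (· ∈ J), fun l _ l' hl' hll' => ?_, fun l hl => ⟨?_, ?_⟩⟩
  · exact Nat.nth_lt_nth' hll' fun _ => hl'.trans_lt hcard
  · exact Nat.le_of_lt_succ (hmem l hl).1
  · exact (hmem l hl).2.trans (hmem 0 n.zero_le).2.symm

theorem prod_Icc_prod_Ico_mul_prod_range {M : Type*} [CommMonoid M] {σ : ℕ → ℕ} {n : ℕ}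
    (hσ : MonotoneOn σ (Set.Iic n)) (y : ℕ → M) {i : ℕ} (hi : i ≤ n) :
    (∏ l ∈ Finset.Icc 1 i, ∏ j ∈ Finset.Ico (σ (l - 1)) (σ l), y j) *
      ∏ j ∈ Finset.range (σ 0), y j = ∏ j ∈ Finset.range (σ i), y j := by
  induction i with
  | zero => simp
  | succ i ih =>
    have hi' : i ≤ n := Nat.le_of_succ_le hi
    rw [Finset.prod_Icc_succ_top (Nat.le_add_left 1 i), mul_right_comm, ih hi',
      Nat.add_sub_cancel, Finset.prod_range_mul_prod_Ico _ (hσ hi' hi i.le_succ)]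

open MvPolynomial

variable {R₀ R : Type*} [CommSemiring R₀] [CommSemiring R] [Algebra R₀ R]

/-- The polynomial `P` with its variable `v` replaced by the product of the variables in the
block `B v`. -/
noncomputable def blockSubst {σ τ : Type*} (B : σ → Finset τ) (P : MvPolynomial σ R₀) :
    MvPolynomial τ R₀ :=
  bind₁ (fun v => ∏ j ∈ B v, X j) P

theorem aeval_blockSubst {σ τ : Type*} (B : σ → Finset τ) (P : MvPolynomial σ R₀) (y : τ → R) :
    aeval y (blockSubst B P) = aeval (fun v => ∏ j ∈ B v, y j) P := by
  simp only [blockSubst, aeval_bind₁, map_prod, aeval_X]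

theorem constantCoeff_blockSubst {σ τ : Type*} {B : σ → Finset τ} (hB : ∀ v, (B v).Nonempty)
    (P : MvPolynomial σ R₀) : constantCoeff (blockSubst B P) = constantCoeff P := by
  have hprod : (fun v => ∏ j ∈ B v, (0 : τ → R₀) j) = 0 := funext fun v =>
    let ⟨_, hj⟩ := hB v
    Finset.prod_eq_zero hj rfl
  rw [← eval_zero, ← eval_zero, ← aeval_eq_eval, ← aeval_eq_eval]
  exact (aeval_blockSubst B P 0).trans (by rw [hprod])

open scoped Classical in
/-- All substitutions of nonempty blocks contained in `{0, …, L - 1}` into the members of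
`F 0, …, F n`. -/
noncomputable def blockFamily (F : ∀ k, Finset (MvPolynomial (Fin k) R₀)) (n L : ℕ) :
    Finset (MvPolynomial ℕ R₀) :=
  (Finset.range (n + 1)).biUnion fun k =>
    Finset.image₂ blockSubst (Fintype.piFinset fun _ => (Finset.range L).powerset.erase ∅) (F k)

theorem mem_blockFamily {F : ∀ k, Finset (MvPolynomial (Fin k) R₀)} {n L : ℕ}
    {f : MvPolynomial ℕ R₀} :
    f ∈ blockFamily F n L ↔ ∃ k ≤ n, ∃ B : Fin k → Finset ℕ,
      (∀ v, (B v).Nonempty ∧ B v ⊆ Finset.range L) ∧ ∃ P ∈ F k, blockSubst B P = f := by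
  simp only [blockFamily, Finset.mem_biUnion, Finset.mem_range, Nat.lt_succ_iff, Finset.mem_image₂,
    Fintype.mem_piFinset, Finset.mem_erase, Finset.mem_powerset, Finset.nonempty_iff_ne_empty]

variable {κ : Type*}

theorem IsStable.aeval_blocks {χ : R → κ} {F : ∀ k, Finset (MvPolynomial (Fin k) R₀)} {n L : ℕ}
    {x : R} {y : ℕ → R} (hxy : IsStable (fun _ => χ) (blockFamily F n L) L x y) {σ : ℕ → ℕ}
    (hσ : StrictMonoOn σ (Set.Iic n)) (hL : ∀ l ≤ n, σ l ≤ L) {i : ℕ} (hi : i ≤ n)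
    {P : MvPolynomial (Fin (n - i)) R₀} (hP : P ∈ F (n - i)) :
    χ ((∏ j ∈ Finset.range (σ i), y j) * x +
        aeval (fun v : Fin (n - i) => ∏ j ∈ Finset.Ico (σ (i + v)) (σ (i + v + 1)), y j) P) =
      χ ((∏ j ∈ Finset.range (σ i), y j) * x) := by
  let B : Fin (n - i) → Finset ℕ := fun v =>
    Finset.Ico (σ (i + v) - σ i) (σ (i + v + 1) - σ i)
  have hle : ∀ v : Fin (n - i), i + v + 1 ≤ n := fun v => by have := v.2; omega
  have hmono : ∀ v : Fin (n - i), σ i ≤ σ (i + v) := fun v =>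
    hσ.monotoneOn hi (Nat.le_of_succ_le (hle v)) (Nat.le_add_right i v)
  have hlt : ∀ v : Fin (n - i), σ (i + v) < σ (i + v + 1) := fun v =>
    hσ (Nat.le_of_succ_le (hle v)) (hle v) (Nat.lt_succ_self _)
  have hB : blockSubst B P ∈ blockFamily F n L :=
    mem_blockFamily.2 ⟨n - i, Nat.sub_le n i, B, fun v =>
      ⟨Finset.nonempty_Ico.2 (Nat.sub_lt_sub_right (hmono v) (hlt v)), fun j hj =>
        Finset.mem_range.2 (((Finset.mem_Ico.1 hj).2.trans_le (Nat.sub_le _ _)).trans_le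
          (hL _ (hle v)))⟩, P, hP, rfl⟩
  have hprod : ∀ v, ∏ j ∈ B v, y (σ i + j) =
      ∏ j ∈ Finset.Ico (σ (i + v)) (σ (i + v + 1)), y j := fun v => by
    rw [Finset.prod_Ico_add, Nat.sub_add_cancel (hmono v),
      Nat.sub_add_cancel ((hmono v).trans (hlt v).le)]
  have hcol := hxy (σ i) (hL i hi) _ hB
  simpa only [aeval_blockSubst, hprod] using hcol

theorem prod_ne_zero_and_mem [NoZeroDivisors R] [Nontrivial R] {I : Ideal R} {ι : Type*}
    {s : Finset ι} (hs : s.Nonempty) {y : ι → R} (hy : ∀ j ∈ s, y j ≠ 0 ∧ y j ∈ I) :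
    ∏ j ∈ s, y j ≠ 0 ∧ ∏ j ∈ s, y j ∈ I :=
  let ⟨_, hj⟩ := hs
  ⟨Finset.prod_ne_zero_iff.2 fun j hj => (hy j hj).1, I.prod_mem hj (hy _ hj).2⟩

theorem stmt7_general [IsCancelAdd R] [NoZeroDivisors R] [Subsingleton (AddUnits R)] {I : Ideal R}
    (hI : I ≠ ⊥) [Finite κ] (χ : R → κ) (n : ℕ) (F : ∀ k, Finset (MvPolynomial (Fin k) R₀))
    (hF : ∀ k, ∀ P ∈ F k, constantCoeff P = 0) :
    ∃ x : R, (x ≠ 0 ∧ x ∈ I) ∧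
    ∃ c : ℕ → R, (∀ i, 1 ≤ i → i ≤ n → c i ≠ 0 ∧ c i ∈ I) ∧
      (∀ i ≤ n, χ ((∏ j ∈ Finset.Icc 1 i, c j) * x) = χ x) ∧
      (∀ i < n, ∀ P ∈ F (n - i),
        χ ((∏ j ∈ Finset.Icc 1 i, c j) * x + aeval (fun v : Fin (n - i) => c (i + 1 + v)) P) =
          χ x) := by
  have hF' : ∀ f ∈ blockFamily F n (Nat.card κ * n), constantCoeff f = 0 := by
    intro f hf
    obtain ⟨k, -, B, hB, P, hP, rfl⟩ := mem_blockFamily.1 hf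
    rw [constantCoeff_blockSubst fun v => (hB v).1, hF k P hP]
  obtain ⟨K, hK, hKχ⟩ := exists_finset_isStable hI _ hF' (Nat.card κ * n) κ
  obtain ⟨⟨x, y⟩, hw, hstable⟩ := hKχ fun _ => χ
  have hxy : IsMultiplierChain I (Nat.card κ * n) x y := hK _ hw
  obtain ⟨σ, hσ, hσφ⟩ := exists_strictMonoOn_mono_color n
    fun i => χ ((∏ j ∈ Finset.range i, y j) * x)
  have hprod := fun i => prod_Icc_prod_Ico_mul_prod_range (i := i) hσ.monotoneOn y
  have : Nontrivial R := ⟨x, 0, hxy.start.1⟩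
  refine ⟨(∏ j ∈ Finset.range (σ 0), y j) * x, ⟨mul_ne_zero ?_ hxy.start.1,
      I.mul_mem_left _ hxy.start.2⟩,
    fun l => ∏ j ∈ Finset.Ico (σ (l - 1)) (σ l), y j, fun i h1 hi => ?_, fun i hi => ?_,
    fun i hi P hP => ?_⟩
  · exact Finset.prod_ne_zero_iff.2 fun j hj =>
      (hxy.multiplier j ((Finset.mem_range.1 hj).trans_le (hσφ 0 n.zero_le).1)).1
  · exact prod_ne_zero_and_mem
      (Finset.nonempty_Ico.2 (hσ ((Nat.sub_le i 1).trans hi) hi (Nat.sub_one_lt_of_lt h1)))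
      fun j hj => hxy.multiplier j ((Finset.mem_Ico.1 hj).2.trans_le (hσφ i hi).1)
  · rw [← mul_assoc, hprod i hi]
    exact (hσφ i hi).2
  · have hcol := hstable.aeval_blocks hσ (fun l hl => (hσφ l hl).1) hi.le hP
    simp only [← mul_assoc, hprod i hi.le, Nat.add_right_comm i 1, Nat.add_sub_cancel]
    exact hcol.trans (hσφ i hi.le).2

end Blocks

section NatPolynomial

theorem finite_setOf_goodOfSize {σ : Type*} [Finite σ] (s : ℕ) :
    {P : MvPolynomial σ ℕ | GoodOfSize s P}.Finite := by
  have : Finite {d : σ →₀ ℕ // d.degree ≤ s} := Finsupp.finite_of_degree_le s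
  let coeffs : MvPolynomial σ ℕ → {d : σ →₀ ℕ // d.degree ≤ s} → ℕ := fun P d => P.coeff d
  refine Set.Finite.of_finite_image (f := coeffs)
    ((Set.Finite.pi' fun _ => Set.finite_Iic s).subset ?_) ?_
  · rintro _ ⟨P, hP, rfl⟩ d
    exact hP.2.2.2 d
  · intro P hP Q hQ hPQ
    ext d
    by_cases hd : d.degree ≤ s
    · exact congrFun hPQ ⟨d, hd⟩
    · rw [MvPolynomial.coeff_eq_zero_of_totalDegree_lt (hP.2.2.1.trans_lt (not_le.1 hd)),
        MvPolynomial.coeff_eq_zero_of_totalDegree_lt (hQ.2.2.1.trans_lt (not_le.1 hd))]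

open Polynomial

instance instIsCancelAddPolynomial {R : Type*} [Semiring R] [IsCancelAdd R] : IsCancelAdd R[X] :=
  have : IsLeftCancelAdd R[X] := ⟨fun p q q' h => ext fun k =>
    add_left_cancel (a := p.coeff k) (by simpa only [coeff_add] using congrArg (coeff · k) h)⟩
  AddCommMagma.IsLeftCancelAdd.toIsCancelAdd R[X]

instance instSubsingletonAddUnitsPolynomial {R : Type*} [Semiring R] [Subsingleton (AddUnits R)] :
    Subsingleton (AddUnits R[X]) := by
  refine subsingleton_of_forall_eq 0 fun u => AddUnits.ext (ext fun k => ?_)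
  have hu : (u : R[X]).coeff k + ((-u : AddUnits R[X]) : R[X]).coeff k = 0 := by
    rw [← coeff_add, AddUnits.add_neg, coeff_zero]
  exact (add_eq_zero.1 hu).1

theorem ker_constantCoeff_ne_bot {R : Type*} [Semiring R] [Nontrivial R] :
    RingHom.ker (constantCoeff : R[X] →+* R) ≠ ⊥ :=
  Submodule.ne_bot_iff _ |>.2 ⟨X, coeff_X_zero, X_ne_zero⟩

end NatPolynomial

theorem stmt7 (m : ℕ) (χ : Polynomial ℕ → Fin m) (n s : ℕ) (hn : 0 < n) (hs : 0 < s) :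
    ∃ x : Polynomial ℕ, InT x ∧
    ∃ c : ℕ → Polynomial ℕ, (∀ i, 1 ≤ i → i ≤ n → InT (c i)) ∧
      (∀ i ≤ n, χ ((∏ j ∈ Finset.Icc 1 i, c j) * x) = χ x) ∧
      (∀ i < n, ∀ P : MvPolynomial (Fin (n - i)) ℕ, GoodOfSize s P →
        χ ((∏ j ∈ Finset.Icc 1 i, c j) * x +
            MvPolynomial.aeval (fun v : Fin (n - i) => c (i + 1 + (v : ℕ))) P) = χ x) := by
  simpa only [InT, Set.Finite.mem_toFinset, Set.mem_ofPred_eq, RingHom.mem_ker,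
    Polynomial.constantCoeff_apply] using
    stmt7_general ker_constantCoeff_ne_bot χ n (fun _ => (finite_setOf_goodOfSize s).toFinset)
      fun _ _ hP => ((finite_setOf_goodOfSize s).mem_toFinset.1 hP).2.1
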